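/- arXiv:2010.08994 — 3 statements merged into one kernel-verified Lean document; each statement's English description precedes it below -/
import Mathlib

section
/- There is an absolute constant C > 0 such that the following holds. Let f : {0,1}^n → {0,1} be a boolean function with n ≥ 2 and sparsity spar(f) = r ≥ 2. Then the L1 norm of the coefficients of the multilinear polynomial computing f satisfies ‖f‖₁ = Σ_{s ⊆ [n]} |f̂(s)| ≤ n^{C·(log₂ r)^5}. -/
/-- The coefficient of the monomial `s` in the unique multilinear polynomial computing
`f : {0,1}^n → ℝ`, given by Möbius inversion. -/
noncomputable def coeff {n : ℕ} (f : Finset (Fin n) → ℝ) (s : Finset (Fin n)) : ℝ :=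
  ∑ t ∈ s.powerset, (-1 : ℝ) ^ (s.card - t.card) * f t

/-- The sparsity of `f`: the number of nonzero coefficients. -/
noncomputable def sparsity {n : ℕ} (f : Finset (Fin n) → ℝ) : ℕ :=
  {s : Finset (Fin n) | coeff f s ≠ 0}.ncard

/-!
A boolean function with fewer than `2 ^ d` monomials has monotone block sensitivity at most
`2 * d ^ 2`. Collapse disjoint sensitive blocks to single variables: fewer than half of all sets of
variables contain a monomial of degree more than `d`, so some set with at least half of the
variables contains none, and on it Markov's inequality bounds the number of sensitive variables by
`d ^ 2`.

Fractional block sensitivity is at most of the order of the square of block sensitivity. Sample a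
few blocks from a fractional packing; their pairwise overlaps cover each coordinate with a
probability quadratically smaller than a single block does, so by an a priori bound on the
fractional sensitivity they rarely change the function, and off the overlaps the blocks are
disjoint. Any bound `2 * G` thereby improves to `G`, as long as `G` is large compared to the square
of the block sensitivity.

If the fractional block sensitivity is at most `F`, some variable occurs in a fraction `1 / F` of
the nonconstant monomials. Setting it to `0` shrinks the support by the factor `1 - 1 / F`, setting
it to `1` loses a variable, and unrolling this recursion gives `‖f‖₁ ≤ (2 * n + 1) ^ O(F * log r)`.
-/

open Finset

section Markov

open Polynomial

theorem abs_derivative_eval_zero_le_sq {p : ℝ[X]} {d : ℕ} (hdeg : p.natDegree ≤ d)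
    (hp : ∀ x ∈ Set.Icc (0 : ℝ) 1, p.eval x ∈ Set.Icc 0 1) :
    |p.derivative.eval 0| ≤ (d : ℝ) ^ 2 := by
  -- `x ↦ (1 - x) / 2` carries `[-1, 1]` to `[0, 1]` and the endpoint `1`, where Chebyshev
  -- polynomials maximise the derivative, to `0`.
  set P : ℝ[X] := C 2 * p.comp (C (1 / 2) - C (1 / 2) * X) - 1 with hP
  have hP_degree : P.degree ≤ d := by
    apply degree_le_of_natDegree_le
    have hlin : (C (1 / 2 : ℝ) - C (1 / 2) * X).natDegree ≤ 1 := by compute_degree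
    have hcomp : (p.comp (C (1 / 2) - C (1 / 2) * X)).natDegree ≤ d :=
      natDegree_comp_le.trans ((Nat.mul_le_mul hdeg hlin).trans_eq (mul_one d))
    simpa [hP] using (natDegree_sub_le _ _).trans
      (max_le ((natDegree_C_mul_le _ _).trans hcomp) (by simp))
  have hP_bound : ∀ x ∈ Set.Icc (-1 : ℝ) 1, |P.eval x| ≤ 1 := by
    intro x hx
    have hpx := hp (1 / 2 - 1 / 2 * x) ⟨by linarith [hx.2], by linarith [hx.1]⟩
    simp only [hP, eval_sub, eval_mul, eval_C, eval_comp, eval_X, eval_one]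
    exact abs_le.2 ⟨by linarith [hpx.1], by linarith [hpx.2]⟩
  have hP_deriv : P.derivative.eval 1 = -p.derivative.eval 0 := by
    simp [hP, derivative_comp]
  have endpoint_bound : ∀ Q : ℝ[X], Q.degree ≤ d → (∀ x ∈ Set.Icc (-1 : ℝ) 1, |Q.eval x| ≤ 1) →
      Q.derivative.eval 1 ≤ (d : ℝ) ^ 2 := fun Q hQ hQ' => by
    simpa [Chebyshev.derivative_T_eval_one] using
      Chebyshev.eval_iterate_derivative_le_of_forall_abs_le_one (k := 1) le_rfl hQ hQ'
  have upper := endpoint_bound P hP_degree hP_bound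
  have lower := endpoint_bound (-P) (by simpa using hP_degree) (by simpa using hP_bound)
  rw [derivative_neg, eval_neg] at lower
  exact abs_le.2 ⟨by linarith, by linarith⟩

end Markov

section MultilinearEval

variable {α : Type*}

/-- The value at (the indicator of) `x` of the multilinear polynomial whose coefficient at the
monomial `∏ i ∈ s, x i` is `c s`. -/
def multilinearEval (c : Finset α → ℝ) (x : Finset α) : ℝ :=
  ∑ s ∈ x.powerset, c s

@[simp]
theorem multilinearEval_empty (c : Finset α → ℝ) : multilinearEval c ∅ = c ∅ := by
  simp [multilinearEval]

theorem multilinearEval_insert [DecidableEq α] (c : Finset α → ℝ) {a : α} {x : Finset α}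
    (ha : a ∉ x) :
    multilinearEval c (insert a x) =
      multilinearEval c x + multilinearEval (fun s => c (insert a s)) x :=
  sum_powerset_insert ha c

theorem multilinearEval_singleton (c : Finset α → ℝ) (a : α) :
    multilinearEval c {a} = c ∅ + c {a} := by
  classical
  simpa using multilinearEval_insert c (notMem_empty a)

theorem coeff_insert {n : ℕ} (f : Finset (Fin n) → ℝ) {a : Fin n} {s : Finset (Fin n)}
    (ha : a ∉ s) : coeff f (insert a s) = coeff (fun t => f (insert a t)) s - coeff f s := by
  rw [coeff, sum_powerset_insert ha, coeff, coeff, sub_eq_neg_add, ← sum_neg_distrib]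
  congr 1 <;> refine sum_congr rfl fun t ht => ?_
  · rw [card_insert_of_notMem ha, Nat.sub_add_comm (card_le_card (mem_powerset.1 ht)), pow_succ]
    ring
  · rw [card_insert_of_notMem ha, card_insert_of_notMem fun h => ha (mem_powerset.1 ht h),
      Nat.add_sub_add_right]

theorem multilinearEval_coeff {n : ℕ} (f : Finset (Fin n) → ℝ) (x : Finset (Fin n)) :
    multilinearEval (coeff f) x = f x := by
  induction x using Finset.induction_on generalizing f with
  | empty => simp [coeff]
  | insert a x ha ih =>
    have insert_coeff : multilinearEval (fun s => coeff f (insert a s)) x =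
        multilinearEval (coeff fun t => f (insert a t)) x - multilinearEval (coeff f) x := by
      simp only [multilinearEval, ← sum_sub_distrib]
      exact sum_congr rfl fun s hs => coeff_insert f fun h => ha (mem_powerset.1 hs h)
    rw [multilinearEval_insert _ ha, insert_coeff, ih, ih, add_sub_cancel]

theorem sum_bernoulli_mul_multilinearEval (c : Finset α → ℝ) (A : Finset α) (μ : ℝ) :
    ∑ y ∈ A.powerset, μ ^ #y * (1 - μ) ^ (#A - #y) * multilinearEval c y =
      ∑ s ∈ A.powerset, c s * μ ^ #s := by
  classical
  induction A using Finset.induction_on generalizing c with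
  | empty => simp
  | insert a A ha ih =>
    have notMem {s : Finset α} (hs : s ∈ A.powerset) : a ∉ s := fun h => ha (mem_powerset.1 hs h)
    rw [sum_powerset_insert ha, sum_powerset_insert ha, ← ih c, ← sum_add_distrib]
    have shifted : ∑ s ∈ A.powerset, c (insert a s) * μ ^ #(insert a s) =
        μ * ∑ s ∈ A.powerset, c (insert a s) * μ ^ #s := by
      rw [mul_sum]
      refine sum_congr rfl fun s hs => ?_
      rw [card_insert_of_notMem (notMem hs)]
      ring
    rw [shifted, ← ih fun s => c (insert a s), mul_sum, ← sum_add_distrib]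
    refine sum_congr rfl fun y hy => ?_
    rw [multilinearEval_insert c (notMem hy), card_insert_of_notMem ha,
      card_insert_of_notMem (notMem hy), Nat.add_sub_add_right,
      Nat.sub_add_comm (card_le_card (mem_powerset.1 hy))]
    ring

open Polynomial in
theorem abs_sum_singleton_le_sq {c : Finset α → ℝ} {d : ℕ} {A : Finset α}
    (hc : ∀ y ⊆ A, multilinearEval c y ∈ Set.Icc 0 1)
    (hdeg : ∀ s ⊆ A, c s ≠ 0 → #s ≤ d) :
    |∑ i ∈ A, c {i}| ≤ (d : ℝ) ^ 2 := by
  -- `p.eval μ` is the expectation of the function at a `μ`-biased random subset of `A`.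
  set p : ℝ[X] := ∑ s ∈ A.powerset, C (c s) * X ^ #s with hp
  have hp_deg : p.natDegree ≤ d := by
    refine natDegree_sum_le_of_forall_le _ _ fun s hs => ?_
    by_cases hcs : c s = 0
    · simp [hcs]
    · exact (natDegree_C_mul_X_pow_le _ _).trans (hdeg s (mem_powerset.1 hs) hcs)
  have hp_eval : ∀ μ ∈ Set.Icc (0 : ℝ) 1, p.eval μ ∈ Set.Icc 0 1 := by
    rintro μ ⟨hμ0, hμ1⟩
    have weight_nonneg (y : Finset α) : 0 ≤ μ ^ #y * (1 - μ) ^ (#A - #y) :=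
      mul_nonneg (pow_nonneg hμ0 _) (pow_nonneg (sub_nonneg.2 hμ1) _)
    have expectation : p.eval μ =
        ∑ y ∈ A.powerset, μ ^ #y * (1 - μ) ^ (#A - #y) * multilinearEval c y := by
      simp [hp, eval_finsetSum, sum_bernoulli_mul_multilinearEval]
    rw [expectation]
    refine ⟨sum_nonneg fun y hy => mul_nonneg (weight_nonneg y) (hc y (mem_powerset.1 hy)).1, ?_⟩
    calc ∑ y ∈ A.powerset, μ ^ #y * (1 - μ) ^ (#A - #y) * multilinearEval c y
        ≤ ∑ y ∈ A.powerset, μ ^ #y * (1 - μ) ^ (#A - #y) := sum_le_sum fun y hy =>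
          mul_le_of_le_one_right (weight_nonneg y) (hc y (mem_powerset.1 hy)).2
      _ = 1 := by simp [sum_pow_mul_eq_add_pow]
  have hp_deriv : p.derivative.eval 0 = ∑ i ∈ A, c {i} := by
    rw [← coeff_zero_eq_eval_zero, coeff_derivative, hp]
    simp only [finsetSum_coeff, coeff_C_mul_X_pow, zero_add, eq_comm (a := 1), ← sum_filter]
    rw [← powersetCard_eq_filter, powersetCard_one, sum_map]
    simp
  exact hp_deriv ▸ abs_derivative_eval_zero_le_sq hp_deg hp_eval

end MultilinearEval

section Sparsity

variable {α ι : Type*} [Fintype α] [Fintype ι]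

/-- The support of a coefficient family; its cardinality is the sparsity. -/
noncomputable def monomials (c : Finset α → ℝ) : Finset (Finset α) :=
  {s | c s ≠ 0}

theorem mem_monomials {c : Finset α → ℝ} {s : Finset α} : s ∈ monomials c ↔ c s ≠ 0 := by
  simp [monomials]

theorem card_monomials_coeff {n : ℕ} (f : Finset (Fin n) → ℝ) :
    #(monomials (coeff f)) = sparsity f := by
  rw [sparsity, ← Set.ncard_coe_finset]
  congr 1
  ext s
  simp [mem_monomials]

theorem two_mul_card_supersets_lt [DecidableEq ι] {S : Finset (Finset ι)} {d : ℕ}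
    (hcard : #S < 2 ^ d) (hS : ∀ s ∈ S, d < #s) :
    2 * #{A : Finset ι | ∃ s ∈ S, s ⊆ A} < 2 ^ Fintype.card ι := by
  have supersets_eq : ({A | ∃ s ∈ S, s ⊆ A} : Finset (Finset ι)) =
      S.biUnion fun s => Icc s univ := by
    ext A
    simp
  have card_supersets (s) (hs : s ∈ S) :
      2 ^ (d + 1) * #(Icc s univ) ≤ 2 ^ Fintype.card ι := by
    rw [card_Icc_finset (subset_univ s), card_univ, ← pow_add]
    have := hS s hs
    have := card_le_univ s
    exact Nat.pow_le_pow_right two_pos (by omega)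
  refine lt_of_mul_lt_mul_left (a := 2 ^ d) ?_ (Nat.zero_le _)
  calc 2 ^ d * (2 * #{A : Finset ι | ∃ s ∈ S, s ⊆ A})
      = 2 ^ (d + 1) * #(S.biUnion fun s => Icc s univ) := by rw [supersets_eq]; ring
    _ ≤ 2 ^ (d + 1) * ∑ s ∈ S, #(Icc s univ) := by gcongr; exact card_biUnion_le
    _ = ∑ s ∈ S, 2 ^ (d + 1) * #(Icc s univ) := mul_sum ..
    _ ≤ #S * 2 ^ Fintype.card ι := sum_le_card_nsmul _ _ _ card_supersets
    _ < 2 ^ d * 2 ^ Fintype.card ι := by gcongr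

theorem exists_half_subset_avoiding {S : Finset (Finset ι)} {d : ℕ} (hcard : #S < 2 ^ d)
    (hS : ∀ s ∈ S, d < #s) :
    ∃ A : Finset ι, Fintype.card ι ≤ 2 * #A ∧ ∀ s ∈ S, ¬s ⊆ A := by
  classical
  -- Fewer than half of all sets contain a member of `S`, so some `A` and `Aᶜ` both avoid `S`.
  set bad : Finset (Finset ι) := {A | ∃ s ∈ S, s ⊆ A} with hbad
  have card_bad : #(bad ∪ bad.image compl) < #(univ : Finset (Finset ι)) := by
    have : 2 * #bad < 2 ^ Fintype.card ι := by convert two_mul_card_supersets_lt hcard hS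
    have := card_union_le bad (bad.image compl)
    have : #(bad.image compl) ≤ #bad := card_image_le
    rw [card_univ, Fintype.card_finset]
    omega
  obtain ⟨A, -, hA⟩ := exists_mem_notMem_of_card_lt_card card_bad
  simp only [mem_union, mem_image, not_or, not_exists, not_and] at hA
  have hA_avoids : ∀ s ∈ S, ¬s ⊆ A := by simpa [hbad] using hA.1
  have hAc_avoids : ∀ s ∈ S, ¬s ⊆ Aᶜ := by
    simpa [hbad] using fun h => hA.2 Aᶜ h (compl_compl A)
  have := card_add_card_compl A
  rcases le_total #Aᶜ #A with h | h
  · exact ⟨A, by omega, hA_avoids⟩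
  · exact ⟨Aᶜ, by omega, hAc_avoids⟩

theorem card_le_two_mul_sq_of_eval_singleton_ne {c : Finset ι → ℝ} {d : ℕ}
    (hbool : ∀ x, multilinearEval c x = 0 ∨ multilinearEval c x = 1)
    (hsparse : #(monomials c) < 2 ^ d)
    (hsens : ∀ i, multilinearEval c {i} ≠ multilinearEval c ∅) :
    Fintype.card ι ≤ 2 * d ^ 2 := by
  classical
  obtain ⟨A, hA_card, hA⟩ := exists_half_subset_avoiding
    (S := {s ∈ monomials c | d < #s}) ((card_filter_le _ _).trans_lt hsparse) (by simp)
  have hdeg : ∀ s ⊆ A, c s ≠ 0 → #s ≤ d := fun s hs hcs =>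
    not_lt.1 fun h => hA s (mem_filter.2 ⟨mem_monomials.2 hcs, h⟩) hs
  have hunit : ∀ y ⊆ A, multilinearEval c y ∈ Set.Icc 0 1 := fun y _ => by
    rcases hbool y with h | h <;> simp [h]
  have linear_coeff (i) : c {i} = 1 - 2 * c ∅ := by
    have hi := hsens i
    have hbool_i := hbool {i}
    have hbool_empty := hbool ∅
    rw [multilinearEval_singleton] at hi hbool_i
    rw [multilinearEval_empty] at hi hbool_empty
    grind
  have abs_linear_coeff : |1 - 2 * c ∅| = 1 := by
    rcases hbool ∅ with h | h <;> rw [multilinearEval_empty] at h <;> norm_num [h]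
  have hA_sq : #A ≤ d ^ 2 := by
    have := abs_sum_singleton_le_sq hunit hdeg
    simp only [linear_coeff, sum_const, nsmul_eq_mul, abs_mul, abs_linear_coeff, Nat.abs_cast,
      mul_one] at this
    exact_mod_cast this
  omega

/-- `f` has monotone block sensitivity at most `b`: at no point `z` can more than `b` blocks,
pairwise disjoint outside `z`, each change the value of `f` when added to `z`. -/
def BlockSensitivityLE {β : Type*} [DecidableEq α] (f : Finset α → β) (b : ℕ) : Prop :=
  ∀ (z : Finset α) (S : Finset (Finset α)),
    (S : Set (Finset α)).Pairwise (fun B B' => B ∩ B' ⊆ z) → (∀ B ∈ S, f (z ∪ B) ≠ f z) → #S ≤ b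

/-- Setting the variables in `z` to `1`, identifying those of each block and setting the remaining
ones to `0` merges monomials, so it does not increase the sparsity. -/
theorem exists_multilinearEval_eq_union_biUnion [DecidableEq α] (c : Finset α → ℝ) (z : Finset α)
    (W : ι → Finset α) (hW : ∀ i j, i ≠ j → W i ∩ W j ⊆ z) :
    ∃ c' : Finset ι → ℝ, (∀ y, multilinearEval c' y = multilinearEval c (z ∪ y.biUnion W)) ∧
      #(monomials c') ≤ #(monomials c) := by
  classical
  let M : Finset (Finset α) := {s ∈ monomials c | s ⊆ z ∪ univ.biUnion W}
  let touched (s : Finset α) : Finset ι := {i | ¬s ∩ W i ⊆ z}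
  have touched_subset_iff (s : Finset α) (y : Finset ι) :
      s ⊆ z ∪ univ.biUnion W ∧ touched s ⊆ y ↔ s ⊆ z ∪ y.biUnion W := by
    simp only [touched, subset_iff, mem_filter, mem_univ, true_and, mem_inter, mem_union,
      mem_biUnion] at hW ⊢
    grind
  refine ⟨fun t => ∑ s ∈ M with touched s = t, c s, fun y => ?_, ?_⟩
  · rw [multilinearEval, sum_fiberwise_eq_sum_filter, multilinearEval]
    simp only [mem_powerset, M, filter_filter, touched_subset_iff]
    refine sum_subset_zero_on_sdiff (fun s hs => ?_) (fun s hs => ?_) fun _ _ => rfl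
    · exact mem_powerset.2 (mem_filter.1 hs).2
    · by_contra hcs
      rw [mem_sdiff, mem_powerset, mem_filter, mem_monomials] at hs
      exact hs.2 ⟨hcs, hs.1⟩
  · refine (card_le_card fun t ht => ?_).trans
      ((card_image_le (f := touched)).trans (card_filter_le _ _) : #(M.image touched) ≤ _)
    obtain ⟨s, hs, -⟩ := exists_ne_zero_of_sum_ne_zero (mem_monomials.1 ht)
    exact mem_image.2 ⟨s, mem_filter.1 hs⟩

theorem blockSensitivityLE_of_card_monomials_lt [DecidableEq α] {c : Finset α → ℝ} {d : ℕ}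
    (hbool : ∀ x, multilinearEval c x = 0 ∨ multilinearEval c x = 1)
    (hsparse : #(monomials c) < 2 ^ d) : BlockSensitivityLE (multilinearEval c) (2 * d ^ 2) := by
  intro z S hdisj hsens
  obtain ⟨c', hc', hc'_card⟩ := exists_multilinearEval_eq_union_biUnion c z (fun B : S => B.1)
    fun B B' h => hdisj B.2 B'.2 (Subtype.coe_ne_coe.2 h)
  simpa using card_le_two_mul_sq_of_eval_singleton_ne (c := c')
    (fun y => by rw [hc']; exact hbool _)
    (hc'_card.trans_lt hsparse) fun B => by simpa [hc'] using hsens B.1 B.2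

end Sparsity

section FractionalBlockSensitivity

variable {α β Ω : Type*}

theorem sum_biUnion_le_sum_sum [DecidableEq Ω] {ι : Type*} (I : Finset ι) (E : ι → Finset Ω)
    {w : Ω → ℝ} (hw : ∀ ω, 0 ≤ w ω) :
    ∑ ω ∈ I.biUnion E, w ω ≤ ∑ i ∈ I, ∑ ω ∈ E i, w ω := by
  classical
  induction I using Finset.induction_on with
  | empty => simp
  | insert i I hi ih =>
    rw [biUnion_insert, sum_insert hi]
    have := sum_union_inter (s₁ := E i) (s₂ := I.biUnion E) (f := w)
    have : 0 ≤ ∑ ω ∈ E i ∩ I.biUnion E, w ω := sum_nonneg fun ω _ => hw ω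
    linarith

theorem sum_prod_filter_mem_mem [Fintype Ω] [DecidableEq Ω] {ι : Type*} [Fintype ι] [DecidableEq ι]
    {μ : Ω → ℝ} (hμ : ∑ x, μ x = 1) (E : Finset Ω) {a b : ι} (hab : a ≠ b) :
    ∑ ω : ι → Ω with ω a ∈ E ∧ ω b ∈ E, ∏ e, μ (ω e) = (∑ x ∈ E, μ x) ^ 2 := by
  have event_eq : ({ω | ω a ∈ E ∧ ω b ∈ E} : Finset (ι → Ω)) =
      Fintype.piFinset fun e => if e ∈ ({a, b} : Finset ι) then E else univ := by
    ext ω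
    simp only [mem_filter, mem_univ, true_and, Fintype.mem_piFinset, mem_insert, mem_singleton]
    refine ⟨fun h e => ?_, fun h => ⟨by simpa using h a, by simpa using h b⟩⟩
    split_ifs with he
    · rcases he with rfl | rfl
      exacts [h.1, h.2]
    · exact mem_univ _
  have factor (e : ι) : ∑ x ∈ (if e ∈ ({a, b} : Finset ι) then E else univ), μ x =
      if e ∈ ({a, b} : Finset ι) then ∑ x ∈ E, μ x else 1 := by
    split_ifs
    exacts [rfl, hμ]
  rw [event_eq, ← prod_univ_sum]
  simp only [factor]
  rw [prod_ite_mem, univ_inter, prod_pair hab, sq]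

variable [Fintype α] [DecidableEq α]

/-- `f` has fractional monotone block sensitivity at most `F`: if the weights `μ` live on blocks
that change the value of `f` when added to `z`, and every coordinate outside `z` is covered with
total weight at most `m`, then the total weight is at most `F * m`. -/
def FracBlockSensitivityLE (f : Finset α → β) (F : ℝ) : Prop :=
  ∀ (z : Finset α) (μ : Finset α → ℝ) (m : ℝ), 0 ≤ m → (∀ B, 0 ≤ μ B) →
    (∀ B, μ B ≠ 0 → f (z ∪ B) ≠ f z) → (∀ j ∉ z, ∑ B with j ∈ B, μ B ≤ m) → ∑ B, μ B ≤ F * m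

namespace FracBlockSensitivityLE

theorem mono {f : Finset α → β} {F G : ℝ} (hf : FracBlockSensitivityLE f F) (hFG : F ≤ G) :
    FracBlockSensitivityLE f G := fun z μ m hm hμ hsens hmarg =>
  (hf z μ m hm hμ hsens hmarg).trans (mul_le_mul_of_nonneg_right hFG hm)

theorem sum_le {f : Finset α → β} {F : ℝ} (hf : FracBlockSensitivityLE f F) {z : Finset α}
    {S : Finset Ω} {w : Ω → ℝ} {W : Ω → Finset α} {m : ℝ} (hm : 0 ≤ m) (hw : ∀ ω ∈ S, 0 ≤ w ω)
    (hsens : ∀ ω ∈ S, f (z ∪ W ω) ≠ f z) (hmarg : ∀ j ∉ z, ∑ ω ∈ S with j ∈ W ω, w ω ≤ m) :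
    ∑ ω ∈ S, w ω ≤ F * m := by
  rw [← sum_fiberwise S W w]
  refine hf z _ m hm (fun B => sum_nonneg fun ω hω => hw ω (mem_filter.1 hω).1) (fun B hB => ?_)
    fun j hj => ?_
  · obtain ⟨ω, hω, -⟩ := exists_ne_zero_of_sum_ne_zero hB
    obtain ⟨hωS, rfl⟩ := mem_filter.1 hω
    exact hsens ω hωS
  · rw [sum_fiberwise_eq_sum_filter]
    simpa using hmarg j hj

end FracBlockSensitivityLE

theorem fracBlockSensitivityLE_card (f : Finset α → β) :
    FracBlockSensitivityLE f (Fintype.card α) := by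
  intro z μ m hm hμ hsens hmarg
  have weight_le (B : Finset α) : μ B ≤ ∑ j ∈ zᶜ, if j ∈ B then μ B else 0 := by
    by_cases hB : μ B = 0
    · simp [hB]
    · obtain ⟨j, hjB, hjz⟩ := not_subset.1 fun h : B ⊆ z => hsens B hB (by rw [union_eq_left.2 h])
      have nonneg : ∀ j ∈ zᶜ, 0 ≤ if j ∈ B then μ B else 0 := fun j _ => by
        split_ifs <;> simp [hμ B]
      simpa [hjB] using single_le_sum nonneg (mem_compl.2 hjz)
  calc ∑ B, μ B ≤ ∑ B, ∑ j ∈ zᶜ, if j ∈ B then μ B else 0 := sum_le_sum fun B _ => weight_le B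
    _ = ∑ j ∈ zᶜ, ∑ B with j ∈ B, μ B := by simp only [sum_comm (t := zᶜ), sum_filter]
    _ ≤ #zᶜ * m := by
      simpa using sum_le_card_nsmul _ _ _ fun j hj => hmarg j (mem_compl.1 hj)
    _ ≤ Fintype.card α * m := by gcongr; exact card_le_univ _

/-- The set of coordinates lying in at least two of the blocks `B`; outside of it the blocks are
pairwise disjoint. -/
def overlap {k : ℕ} (B : Fin k → Finset α) : Finset α :=
  {j | ∃ a b, a ≠ b ∧ j ∈ B a ∧ j ∈ B b}

theorem mem_overlap {k : ℕ} {B : Fin k → Finset α} {j : α} :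
    j ∈ overlap B ↔ ∃ a b, a ≠ b ∧ j ∈ B a ∧ j ∈ B b := by
  simp [overlap]

theorem mem_overlap_of_mem_overlap_insertNth {k : ℕ} {i : Fin (k + 1)} {A : Finset α}
    {B : Fin k → Finset α} {j : α}
    (hj : j ∈ overlap (i.insertNth (α := fun _ => Finset α) A B)) (hjA : j ∉ A) :
    j ∈ overlap B := by
  obtain ⟨a, b, hab, ha, hb⟩ := mem_overlap.1 hj
  rcases Fin.eq_self_or_eq_succAbove i a with rfl | ⟨a, rfl⟩
  · exact absurd (by simpa using ha) hjA
  rcases Fin.eq_self_or_eq_succAbove i b with rfl | ⟨b, rfl⟩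
  · exact absurd (by simpa using hb) hjA
  exact mem_overlap.2 ⟨a, b, fun h => hab (h ▸ rfl), by simpa using ha, by simpa using hb⟩

section RandomBlocks

variable {f : Finset α → β} {F q : ℝ} {μ : Finset α → ℝ} {z : Finset α}

theorem sum_prod_filter_mem_overlap_le (k : ℕ) (hμ : ∀ B, 0 ≤ μ B) (hμ1 : ∑ B, μ B = 1) {j : α}
    (hq : ∑ B with j ∈ B, μ B ≤ q) :
    ∑ B : Fin k → Finset α with j ∈ overlap B, ∏ a, μ (B a) ≤ (k : ℝ) ^ 2 * q ^ 2 := by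
  have event_eq : ({B | j ∈ overlap B} : Finset (Fin k → Finset α)) =
      univ.offDiag.biUnion fun p => {B | j ∈ B p.1 ∧ j ∈ B p.2} := by
    ext B
    simp [mem_overlap]
  have pair_le (p : Fin k × Fin k) (hp : p ∈ univ.offDiag) :
      ∑ B : Fin k → Finset α with j ∈ B p.1 ∧ j ∈ B p.2, ∏ a, μ (B a) ≤ q ^ 2 := by
    have := sum_prod_filter_mem_mem hμ1 {B | j ∈ B} (mem_offDiag.1 hp).2.2
    simp only [mem_filter, mem_univ, true_and] at this
    rw [this]
    have : 0 ≤ ∑ B with j ∈ B, μ B := sum_nonneg fun B _ => hμ B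
    gcongr
  rw [event_eq]
  calc _ ≤ ∑ p ∈ univ.offDiag, ∑ B : Fin k → Finset α with j ∈ B p.1 ∧ j ∈ B p.2, ∏ a, μ (B a) :=
        sum_biUnion_le_sum_sum _ _ fun B => prod_nonneg fun a _ => hμ (B a)
    _ ≤ #(univ : Finset (Fin k)).offDiag * q ^ 2 := by
        simpa using sum_le_card_nsmul _ _ _ pair_le
    _ ≤ (k : ℝ) ^ 2 * q ^ 2 := by
        gcongr
        rw [offDiag_card, card_univ, Fintype.card_fin, sq]
        exact_mod_cast Nat.sub_le _ _

theorem FracBlockSensitivityLE.sum_prod_overlap_ne_le [DecidableEq β]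
    (hf : FracBlockSensitivityLE f F) (k : ℕ) (hμ : ∀ B, 0 ≤ μ B) (hμ1 : ∑ B, μ B = 1)
    (hq : ∀ j ∉ z, ∑ B with j ∈ B, μ B ≤ q) :
    ∑ B : Fin k → Finset α with f (z ∪ overlap B) ≠ f z, ∏ a, μ (B a) ≤
      F * ((k : ℝ) ^ 2 * q ^ 2) := by
  have prod_nonneg (B : Fin k → Finset α) : 0 ≤ ∏ a, μ (B a) := prod_nonneg fun a _ => hμ (B a)
  refine hf.sum_le (W := overlap) (by positivity) (fun B _ => prod_nonneg B)
    (fun B hB => (mem_filter.1 hB).2) fun j hj => ?_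
  refine le_trans ?_ (sum_prod_filter_mem_overlap_le k hμ hμ1 (hq j hj))
  exact sum_le_sum_of_subset_of_nonneg (filter_subset_filter _ (subset_univ _))
    fun B _ _ => prod_nonneg B

theorem FracBlockSensitivityLE.sum_prod_union_overlap_ne_le [DecidableEq β]
    (hf : FracBlockSensitivityLE f F) {k : ℕ} (i : Fin (k + 1)) (hμ : ∀ B, 0 ≤ μ B)
    (hμ1 : ∑ B, μ B = 1) (hq : ∀ j ∉ z, ∑ B with j ∈ B, μ B ≤ q) :
    ∑ B : Fin (k + 1) → Finset α with f (z ∪ B i ∪ overlap B) ≠ f (z ∪ B i), ∏ a, μ (B a) ≤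
      F * ((k : ℝ) ^ 2 * q ^ 2) := by
  have prod_nonneg (B : Fin k → Finset α) : 0 ≤ ∏ a, μ (B a) := prod_nonneg fun a _ => hμ (B a)
  -- Condition on the block `B i = A`, which is independent of the others.
  have conditioned (A : Finset α) :
      ∑ B : Fin k → Finset α with
        f (z ∪ A ∪ overlap (i.insertNth (α := fun _ => Finset α) A B)) ≠ f (z ∪ A),
        ∏ a, μ (B a) ≤ F * ((k : ℝ) ^ 2 * q ^ 2) := by
    refine hf.sum_le (W := fun B => overlap (i.insertNth (α := fun _ => Finset α) A B))
      (by positivity) (fun B _ => prod_nonneg B) (fun B hB => (mem_filter.1 hB).2) fun j hj => ?_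
    rw [mem_union, not_or] at hj
    refine le_trans ?_ (sum_prod_filter_mem_overlap_le k hμ hμ1 (hq j hj.1))
    refine sum_le_sum_of_subset_of_nonneg (fun B hB => ?_) fun B _ _ => prod_nonneg B
    exact mem_filter.2
      ⟨mem_univ _, mem_overlap_of_mem_overlap_insertNth (mem_filter.1 hB).2 hj.2⟩
  rw [sum_filter, ← Equiv.sum_comp (Fin.insertNthEquiv (fun _ => Finset α) i),
    Fintype.sum_prod_type]
  calc _ = ∑ A, μ A * ∑ B : Fin k → Finset α with
          f (z ∪ A ∪ overlap (i.insertNth (α := fun _ => Finset α) A B)) ≠ f (z ∪ A),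
          ∏ a, μ (B a) := by
        simp only [sum_filter, mul_sum, mul_ite, mul_zero]
        simp [Fin.insertNthEquiv, Fin.prod_univ_succAbove _ i]
    _ ≤ ∑ A, μ A * (F * ((k : ℝ) ^ 2 * q ^ 2)) :=
        sum_le_sum fun A _ => mul_le_mul_of_nonneg_left (conditioned A) (hμ A)
    _ = F * ((k : ℝ) ^ 2 * q ^ 2) := by rw [← sum_mul, hμ1, one_mul]

theorem BlockSensitivityLE.card_filter_overlap_le [DecidableEq β] {b k : ℕ}
    (hf : BlockSensitivityLE f b) (z : Finset α) (B : Fin k → Finset α) :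
    #{i | f (z ∪ overlap B ∪ B i) ≠ f (z ∪ overlap B)} ≤ b := by
  set good : Finset (Fin k) := {i | f (z ∪ overlap B ∪ B i) ≠ f (z ∪ overlap B)}
  have inter_subset (i j) (hij : i ≠ j) : B i ∩ B j ⊆ z ∪ overlap B := fun x hx =>
    mem_union_right _ (mem_overlap.2 ⟨i, j, hij, (mem_inter.1 hx).1, (mem_inter.1 hx).2⟩)
  have injOn : Set.InjOn B good := by
    intro i hi j _ hij
    by_contra hne
    have hsub : B i ⊆ z ∪ overlap B := by simpa [hij] using inter_subset i j hne
    exact (mem_filter.1 (mem_coe.1 hi)).2 (by rw [union_eq_left.2 hsub])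
  rw [← card_image_of_injOn injOn]
  refine hf (z ∪ overlap B) _ ?_ ?_
  · intro A hA A' hA' hne
    obtain ⟨i, -, rfl⟩ := mem_image.1 hA
    obtain ⟨j, -, rfl⟩ := mem_image.1 hA'
    exact inter_subset i j fun h => hne (h ▸ rfl)
  · intro A hA
    obtain ⟨i, hi, rfl⟩ := mem_image.1 hA
    exact (mem_filter.1 hi).2

theorem FracBlockSensitivityLE.le_sum_prod_overlap_union_ne [DecidableEq β]
    (hf : FracBlockSensitivityLE f F) {k : ℕ} (i : Fin (k + 1)) (hμ : ∀ B, 0 ≤ μ B)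
    (hμ1 : ∑ B, μ B = 1) (hsens : ∀ B, μ B ≠ 0 → f (z ∪ B) ≠ f z)
    (hq : ∀ j ∉ z, ∑ B with j ∈ B, μ B ≤ q) :
    1 - F * (((k + 1 : ℕ) : ℝ) ^ 2 * q ^ 2) - F * ((k : ℝ) ^ 2 * q ^ 2) ≤
      ∑ B : Fin (k + 1) → Finset α with f (z ∪ overlap B ∪ B i) ≠ f (z ∪ overlap B),
        ∏ a, μ (B a) := by
  have total : ∑ B : Fin (k + 1) → Finset α, ∏ a, μ (B a) = 1 := by
    simp [← Fintype.prod_sum, hμ1]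
  have union_bound : ∑ B : Fin (k + 1) → Finset α, ∏ a, μ (B a) ≤
      ∑ B : Fin (k + 1) → Finset α with f (z ∪ overlap B ∪ B i) ≠ f (z ∪ overlap B),
          ∏ a, μ (B a) +
        ∑ B : Fin (k + 1) → Finset α with f (z ∪ overlap B) ≠ f z, ∏ a, μ (B a) +
        ∑ B : Fin (k + 1) → Finset α with f (z ∪ B i ∪ overlap B) ≠ f (z ∪ B i),
          ∏ a, μ (B a) := by
    simp only [sum_filter, ← sum_add_distrib]
    refine sum_le_sum fun B _ => ?_
    have prod_nonneg : 0 ≤ ∏ a, μ (B a) := prod_nonneg fun a _ => hμ (B a)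
    by_cases hB : ∏ a, μ (B a) = 0
    · simp [hB]
    · have := hsens (B i) (prod_ne_zero_iff.1 hB i (mem_univ i))
      rw [union_right_comm z (B i)]
      split_ifs <;> first | linarith | grind
  have := hf.sum_prod_overlap_ne_le (k + 1) hμ hμ1 hq
  have := hf.sum_prod_union_overlap_ne_le i hμ hμ1 hq
  linarith

theorem BlockSensitivityLE.succ_mul_le {b : ℕ} (hb : BlockSensitivityLE f b)
    (hf : FracBlockSensitivityLE f F) (k : ℕ) (hμ : ∀ B, 0 ≤ μ B) (hμ1 : ∑ B, μ B = 1)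
    (hsens : ∀ B, μ B ≠ 0 → f (z ∪ B) ≠ f z) (hq : ∀ j ∉ z, ∑ B with j ∈ B, μ B ≤ q) :
    ((k + 1 : ℕ) : ℝ) *
      (1 - F * (((k + 1 : ℕ) : ℝ) ^ 2 * q ^ 2) - F * ((k : ℝ) ^ 2 * q ^ 2)) ≤ b := by
  classical
  have prod_nonneg (B : Fin (k + 1) → Finset α) : 0 ≤ ∏ a, μ (B a) :=
    prod_nonneg fun a _ => hμ (B a)
  calc _ ≤ ∑ i, ∑ B : Fin (k + 1) → Finset α with
          f (z ∪ overlap B ∪ B i) ≠ f (z ∪ overlap B), ∏ a, μ (B a) := by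
        simpa using card_nsmul_le_sum univ _ _
          fun i _ => hf.le_sum_prod_overlap_union_ne i hμ hμ1 hsens hq
    _ = ∑ B : Fin (k + 1) → Finset α,
          #{i | f (z ∪ overlap B ∪ B i) ≠ f (z ∪ overlap B)} * ∏ a, μ (B a) := by
        simp only [sum_filter]
        rw [sum_comm]
        simp only [← sum_filter, sum_const, nsmul_eq_mul]
    _ ≤ ∑ B : Fin (k + 1) → Finset α, b * ∏ a, μ (B a) := sum_le_sum fun B _ =>
        mul_le_mul_of_nonneg_right (mod_cast hb.card_filter_overlap_le z B) (prod_nonneg B)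
    _ = b := by simp [← mul_sum, ← Fintype.prod_sum, hμ1]

end RandomBlocks

theorem BlockSensitivityLE.fracBlockSensitivityLE_of_two_mul {f : Finset α → β} {b : ℕ} {G : ℝ}
    (hb : BlockSensitivityLE f b) (hG : 8 * (2 * b + 1) ^ 2 ≤ G)
    (hf : FracBlockSensitivityLE f (2 * G)) : FracBlockSensitivityLE f G := by
  intro z μ m hm hμ hsens hmarg
  by_contra! htotal
  set M := ∑ B, μ B
  have hG_pos : 0 < G := lt_of_lt_of_le (by positivity) hG
  have hM_pos : 0 < M := (mul_nonneg hG_pos.le hm).trans_lt htotal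
  set q := m / M
  have hGq_nonneg : 0 ≤ G * q := mul_nonneg hG_pos.le (div_nonneg hm hM_pos.le)
  have hGq_lt : G * q < 1 := by
    rwa [← mul_div_assoc, div_lt_one hM_pos]
  have key := hb.succ_mul_le hf (2 * b) (μ := fun B => μ B / M) (q := q) (z := z)
    (fun B => div_nonneg (hμ B) hM_pos.le) (by rw [← sum_div, div_self hM_pos.ne'])
    (fun B hB => hsens B fun h => hB (by simp [h])) fun j hj => by
      rw [← sum_div]
      exact div_le_div_of_nonneg_right (hmarg j hj) hM_pos.le
  have failure_le (a : ℝ) (ha : a ^ 2 ≤ (2 * b + 1) ^ 2) :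
      2 * G * (a ^ 2 * q ^ 2) ≤ 1 / 4 := by
    calc 2 * G * (a ^ 2 * q ^ 2) ≤ 2 * G * (G / 8 * q ^ 2) := by gcongr; linarith
      _ = (G * q) ^ 2 / 4 := by ring
      _ ≤ 1 / 4 := by gcongr; exact pow_le_one₀ hGq_nonneg hGq_lt.le
  push_cast at key
  have success_ge : 1 / 2 ≤
      1 - 2 * G * ((2 * b + 1 : ℝ) ^ 2 * q ^ 2) - 2 * G * ((2 * b : ℝ) ^ 2 * q ^ 2) := by
    linarith [failure_le (2 * b + 1) le_rfl, failure_le (2 * b) (by gcongr; linarith)]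
  have : (2 * b + 1 : ℝ) * (1 / 2) ≤ b := le_trans (by gcongr) key
  linarith

theorem BlockSensitivityLE.fracBlockSensitivityLE {f : Finset α → β} {b : ℕ}
    (hb : BlockSensitivityLE f b) : FracBlockSensitivityLE f (8 * (2 * b + 1) ^ 2) := by
  have descent (t : ℕ) : FracBlockSensitivityLE f (2 ^ t * (8 * (2 * b + 1) ^ 2)) →
      FracBlockSensitivityLE f (8 * (2 * b + 1) ^ 2) := by
    induction t with
    | zero => simp
    | succ t ih =>
      refine fun hf => ih (hb.fracBlockSensitivityLE_of_two_mul ?_ ?_)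
      · exact le_mul_of_one_le_left (by positivity) (one_le_pow₀ one_le_two)
      · rwa [← mul_assoc, ← pow_succ']
  refine descent (Fintype.card α) ((fracBlockSensitivityLE_card f).mono ?_)
  have card_le : (Fintype.card α : ℝ) ≤ 2 ^ Fintype.card α :=
    mod_cast Nat.lt_two_pow_self.le
  have : (0 : ℝ) ≤ b := b.cast_nonneg
  exact card_le.trans (le_mul_of_one_le_right (by positivity) (by nlinarith))

end FractionalBlockSensitivity

section Restriction

variable {α : Type*} [DecidableEq α]

/-- The coefficients of the multilinear polynomial obtained by setting the variable `i` to `0`. -/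
def restrictZero (i : α) (c : Finset α → ℝ) (s : Finset α) : ℝ :=
  if i ∈ s then 0 else c s

/-- The coefficients of the multilinear polynomial obtained by setting the variable `i` to `1`. -/
def restrictOne (i : α) (c : Finset α → ℝ) : Finset α → ℝ :=
  restrictZero i fun s => c s + c (insert i s)

theorem multilinearEval_restrictZero (i : α) (c : Finset α → ℝ) (x : Finset α) :
    multilinearEval (restrictZero i c) x = multilinearEval c (x.erase i) := by
  have powerset_erase : (x.erase i).powerset = {s ∈ x.powerset | i ∉ s} := by
    ext s
    simp [subset_erase]
  simp [multilinearEval, restrictZero, powerset_erase, sum_filter]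

theorem multilinearEval_restrictOne (i : α) (c : Finset α → ℝ) (x : Finset α) :
    multilinearEval (restrictOne i c) x = multilinearEval c (insert i x) := by
  have insert_eq : insert i x = insert i (x.erase i) := by grind
  rw [restrictOne, multilinearEval_restrictZero, insert_eq,
    multilinearEval_insert c (notMem_erase i x)]
  exact sum_add_distrib

end Restriction

section NonconstMonomials

variable {α β : Type*} [Fintype α]

/-- The nonempty monomials with nonzero coefficient. Their number measures progress in the
recursion, since a function without any is constant. -/
noncomputable def nonconstMonomials (c : Finset α → ℝ) : Finset (Finset α) :=
  {s ∈ monomials c | s.Nonempty}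

theorem mem_nonconstMonomials {c : Finset α → ℝ} {s : Finset α} :
    s ∈ nonconstMonomials c ↔ c s ≠ 0 ∧ s.Nonempty := by
  simp [nonconstMonomials, mem_monomials]

theorem multilinearEval_of_minimal {c : Finset α → ℝ} {w : Finset α}
    (hw : Minimal (· ∈ nonconstMonomials c) w) : multilinearEval c w = c ∅ + c w := by
  classical
  have hw_nonempty := (mem_nonconstMonomials.1 hw.prop).2
  rw [multilinearEval, ← sum_pair (f := c) hw_nonempty.ne_empty.symm]
  symm
  apply sum_subset (by simp [insert_subset_iff])
  intro s hs hs'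
  by_contra hcs
  rw [mem_insert, mem_singleton, not_or] at hs'
  have hs_mem := mem_nonconstMonomials.2 ⟨hcs, nonempty_iff_ne_empty.2 hs'.1⟩
  exact hs'.2 (hw.eq_of_le hs_mem (mem_powerset.1 hs))

variable [DecidableEq α]

/-- Minimal nonconstant monomials are sensitive blocks at `∅`, so weighting each of them by the
number of monomials assigned to it makes fractional block sensitivity produce a popular variable. -/
theorem FracBlockSensitivityLE.exists_card_le_mul_card_filter_mem {c : Finset α → ℝ} {F : ℝ}
    (hf : FracBlockSensitivityLE (multilinearEval c) F) (hne : (nonconstMonomials c).Nonempty) :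
    ∃ i, (#(nonconstMonomials c) : ℝ) ≤ F * #{s ∈ nonconstMonomials c | i ∈ s} := by
  obtain ⟨s₀, hs₀⟩ := hne
  have : Nonempty α := (mem_nonconstMonomials.1 hs₀).2.to_type
  obtain ⟨i, hi⟩ := Finite.exists_max fun i => #{s ∈ nonconstMonomials c | i ∈ s}
  have exists_minimal (s : Finset α) :
      ∃ w, s ∈ nonconstMonomials c → w ⊆ s ∧ Minimal (· ∈ nonconstMonomials c) w := by
    by_cases hs : s ∈ nonconstMonomials c
    · obtain ⟨w, hws, hw⟩ := (nonconstMonomials c).exists_le_minimal hs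
      exact ⟨w, fun _ => ⟨hws, hw⟩⟩
    · exact ⟨∅, fun h => absurd h hs⟩
  choose W hW using exists_minimal
  refine ⟨i, ?_⟩
  have key := hf.sum_le (z := ∅) (S := nonconstMonomials c) (w := fun _ => 1) (W := W)
    (m := #{s ∈ nonconstMonomials c | i ∈ s}) (Nat.cast_nonneg _) (fun _ _ => zero_le_one)
    (fun s hs => ?_) fun j _ => ?_
  · simpa using key
  · have hWs := (hW s hs).2
    rw [empty_union, multilinearEval_of_minimal hWs, multilinearEval_empty]
    simpa using (mem_nonconstMonomials.1 hWs.prop).1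
  · have : #{s ∈ nonconstMonomials c | j ∈ W s} ≤ #{s ∈ nonconstMonomials c | j ∈ s} :=
      card_le_card fun s hs => by
        rw [mem_filter] at hs ⊢
        exact ⟨hs.1, (hW s hs.1).1 hs.2⟩
    simpa using this.trans (hi j)

theorem FracBlockSensitivityLE.comp_erase {f : Finset α → β} {F : ℝ}
    (hf : FracBlockSensitivityLE f F) (i : α) :
    FracBlockSensitivityLE (fun x => f (x.erase i)) F := by
  intro z μ m hm hμ hsens hmarg
  rw [← sum_filter_ne_zero]
  refine hf.sum_le (z := z.erase i) (W := fun B => B.erase i) hm (fun B _ => hμ B) (fun B hB => ?_)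
    fun j hj => ?_
  · rw [← erase_union_distrib]
    exact hsens B (mem_filter.1 hB).2
  · by_cases hji : j = i
    · simpa [hji] using hm
    · refine le_trans (sum_le_sum_of_subset_of_nonneg (fun B hB => ?_) fun B _ _ => hμ B)
        (hmarg j fun h => hj (mem_erase.2 ⟨hji, h⟩))
      exact mem_filter.2 ⟨mem_univ _, mem_of_mem_erase (mem_filter.1 hB).2⟩

theorem FracBlockSensitivityLE.comp_insert {f : Finset α → β} {F : ℝ}
    (hf : FracBlockSensitivityLE f F) (i : α) :
    FracBlockSensitivityLE (fun x => f (insert i x)) F := by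
  intro z μ m hm hμ hsens hmarg
  refine hf (insert i z) μ m hm hμ (fun B hB => ?_) fun j hj =>
    hmarg j fun h => hj (mem_insert_of_mem h)
  rw [insert_union]
  exact hsens B hB

theorem card_nonconstMonomials_restrictZero_add (i : α) (c : Finset α → ℝ) :
    #(nonconstMonomials (restrictZero i c)) + #{s ∈ nonconstMonomials c | i ∈ s} =
      #(nonconstMonomials c) := by
  have restrict_eq : nonconstMonomials (restrictZero i c) =
      {s ∈ nonconstMonomials c | i ∉ s} := by
    ext s
    simp only [mem_filter, mem_nonconstMonomials, restrictZero]
    grind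
  rw [restrict_eq, add_comm, card_filter_add_card_filter_not]

theorem card_nonconstMonomials_restrictZero_le {i : α} {c : Finset α → ℝ} {F : ℝ} (hF : 0 < F)
    (hi : (#(nonconstMonomials c) : ℝ) ≤ F * #{s ∈ nonconstMonomials c | i ∈ s}) :
    #(nonconstMonomials (restrictZero i c)) ≤ (1 - 1 / F) * #(nonconstMonomials c) := by
  have card_eq : (#(nonconstMonomials (restrictZero i c)) : ℝ) +
      #{s ∈ nonconstMonomials c | i ∈ s} = #(nonconstMonomials c) :=
    mod_cast card_nonconstMonomials_restrictZero_add i c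
  have popular : 1 / F * #(nonconstMonomials c) ≤ #{s ∈ nonconstMonomials c | i ∈ s} := by
    rwa [one_div_mul_eq_div, div_le_iff₀' hF]
  linarith

theorem nonconstMonomials_restrictOne_subset (i : α) (c : Finset α → ℝ) :
    nonconstMonomials (restrictOne i c) ⊆ (nonconstMonomials c).image (erase · i) := by
  intro s hs
  obtain ⟨hcs, hs⟩ := mem_nonconstMonomials.1 hs
  have his : i ∉ s := fun h => hcs (by simp [restrictOne, restrictZero, h])
  simp only [restrictOne, restrictZero, if_neg his] at hcs
  by_cases hc : c s = 0
  · rw [hc, zero_add] at hcs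
    exact mem_image.2 ⟨insert i s, mem_nonconstMonomials.2 ⟨hcs, insert_nonempty i s⟩,
      erase_insert his⟩
  · exact mem_image.2 ⟨s, mem_nonconstMonomials.2 ⟨hc, hs⟩, erase_eq_of_notMem his⟩

end NonconstMonomials

section L1Norm

theorem mul_one_sub_inv_pow_lt_one {r F : ℝ} {t : ℕ} (hr : 0 < r) (hF : 1 ≤ F)
    (ht : F * Real.log r < t) : r * (1 - 1 / F) ^ t < 1 := by
  have hF_pos : 0 < F := zero_lt_one.trans_le hF
  have hinv : 0 ≤ 1 - 1 / F := sub_nonneg.2 ((div_le_one hF_pos).2 hF)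
  calc r * (1 - 1 / F) ^ t ≤ Real.exp (Real.log r) * Real.exp (-(1 / F)) ^ t := by
        rw [Real.exp_log hr]
        gcongr
        exact Real.one_sub_le_exp_neg _
    _ = Real.exp (Real.log r - t / F) := by
        rw [← Real.exp_nat_mul, ← Real.exp_add]
        ring_nf
    _ < 1 := by
        rw [Real.exp_lt_one_iff, sub_neg, lt_div_iff₀ hF_pos]
        linarith

variable {α : Type*} [Fintype α]

/-- The `ℓ¹` norm of a coefficient family. -/
def l1Norm (c : Finset α → ℝ) : ℝ :=
  ∑ s, |c s|

theorem l1Norm_le_one {c : Finset α → ℝ} (hbdd : |multilinearEval c ∅| ≤ 1)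
    (hc : nonconstMonomials c = ∅) : l1Norm c ≤ 1 := by
  rw [multilinearEval_empty] at hbdd
  rw [l1Norm, Fintype.sum_eq_single ∅ fun s hs => ?_]
  · exact hbdd
  · by_contra hcs
    have : s ∈ nonconstMonomials c :=
      mem_nonconstMonomials.2 ⟨abs_ne_zero.1 hcs, nonempty_iff_ne_empty.2 hs⟩
    simp [hc] at this

theorem l1Norm_le_restrict [DecidableEq α] (i : α) (c : Finset α → ℝ) :
    l1Norm c ≤ 2 * l1Norm (restrictZero i c) + l1Norm (restrictOne i c) := by
  have sum_insert_eq : ∑ s with i ∈ s, |c s| = ∑ s with i ∉ s, |c (insert i s)| :=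
    sum_nbij' (erase · i) (insert i) (by simp) (by simp) (by simp +contextual)
      (by simp +contextual) (by simp +contextual)
  simp only [l1Norm, restrictOne, restrictZero, apply_ite abs, abs_zero]
  rw [← sum_filter_add_sum_filter_not univ (i ∈ ·), sum_insert_eq, mul_sum, ← sum_add_distrib,
    ← sum_add_distrib, sum_filter]
  refine sum_le_sum fun s _ => ?_
  split_ifs <;> grind

variable {c : Finset α → ℝ} {F : ℝ}

theorem l1Norm_le_of_shrunk_le [DecidableEq α] {B N : ℝ} (hF : 1 ≤ F) (hB : 0 ≤ B)
    (hshrunk : ∀ c' : Finset α → ℝ, (∀ x, |multilinearEval c' x| ≤ 1) →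
      FracBlockSensitivityLE (multilinearEval c') F →
      #(nonconstMonomials c') ≤ (1 - 1 / F) * N → l1Norm c' ≤ B)
    (V : Finset α) (hbdd : ∀ x, |multilinearEval c x| ≤ 1)
    (hf : FracBlockSensitivityLE (multilinearEval c) F) (hN : #(nonconstMonomials c) ≤ N)
    (hV : ∀ s ∈ nonconstMonomials c, s ⊆ V) : l1Norm c ≤ 1 + 2 * #V * B := by
  induction V using Finset.strongInduction generalizing c with
  | H V ih =>
  have hF_pos : 0 < F := zero_lt_one.trans_le hF
  rcases (nonconstMonomials c).eq_empty_or_nonempty with hc | hc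
  · exact (l1Norm_le_one (hbdd ∅) hc).trans (le_add_of_nonneg_right (by positivity))
  obtain ⟨i, hi⟩ := hf.exists_card_le_mul_card_filter_mem hc
  have hiV : i ∈ V := by
    by_contra hiV
    have : #{s ∈ nonconstMonomials c | i ∈ s} = 0 :=
      card_eq_zero.2 (filter_eq_empty_iff.2 fun s hs h => hiV (hV s hs h))
    rw [this, Nat.cast_zero, mul_zero] at hi
    exact hi.not_gt (mod_cast hc.card_pos)
  have zero_le : l1Norm (restrictZero i c) ≤ B := by
    refine hshrunk _ (fun x => ?_) ?_ ?_
    · rw [multilinearEval_restrictZero]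
      exact hbdd _
    · rw [funext (multilinearEval_restrictZero i c)]
      exact hf.comp_erase i
    · have hinv : 0 ≤ 1 - 1 / F := sub_nonneg.2 ((div_le_one hF_pos).2 hF)
      exact (card_nonconstMonomials_restrictZero_le hF_pos hi).trans
        (mul_le_mul_of_nonneg_left hN hinv)
  have one_le : l1Norm (restrictOne i c) ≤ 1 + 2 * #(V.erase i) * B := by
    refine ih _ (erase_ssubset hiV) (fun x => ?_) ?_ ?_ fun s hs => ?_
    · rw [multilinearEval_restrictOne]
      exact hbdd _
    · rw [funext (multilinearEval_restrictOne i c)]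
      exact hf.comp_insert i
    · exact le_trans (mod_cast (card_le_card (nonconstMonomials_restrictOne_subset i c)).trans
        card_image_le) hN
    · obtain ⟨t, ht, rfl⟩ := mem_image.1 (nonconstMonomials_restrictOne_subset i c hs)
      exact erase_subset_erase i (hV t ht)
  rw [cast_card_erase_of_mem hiV] at one_le
  linarith [l1Norm_le_restrict i c]

theorem l1Norm_le_pow [DecidableEq α] (hF : 1 ≤ F) (hbdd : ∀ x, |multilinearEval c x| ≤ 1)
    (hf : FracBlockSensitivityLE (multilinearEval c) F) {t : ℕ}
    (ht : #(nonconstMonomials c) * (1 - 1 / F) ^ t < 1) :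
    l1Norm c ≤ (2 * Fintype.card α + 1) ^ t := by
  induction t generalizing c with
  | zero =>
    rw [pow_zero, mul_one] at ht
    simpa using l1Norm_le_one (hbdd ∅) (card_eq_zero.1 (Nat.lt_one_iff.1 (mod_cast ht)))
  | succ t ih =>
    have hinv : 0 ≤ 1 - 1 / F := sub_nonneg.2 ((div_le_one (by linarith)).2 hF)
    have one_le_pow : (1 : ℝ) ≤ (2 * Fintype.card α + 1) ^ t :=
      one_le_pow₀ (le_add_of_nonneg_left (by positivity))
    have key := l1Norm_le_of_shrunk_le hF (zero_le_one.trans one_le_pow)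
      (fun c' hbdd' hf' hcard => ih hbdd' hf' ?_) univ hbdd hf le_rfl fun s _ => subset_univ s
    · rw [card_univ] at key
      rw [pow_succ]
      linarith
    · calc _ ≤ (1 - 1 / F) * #(nonconstMonomials c) * (1 - 1 / F) ^ t := by gcongr
        _ = #(nonconstMonomials c) * (1 - 1 / F) ^ (t + 1) := by ring
        _ < 1 := ht

theorem l1Norm_le_pow_log [DecidableEq α] (hF : 1 ≤ F) (hbdd : ∀ x, |multilinearEval c x| ≤ 1)
    (hf : FracBlockSensitivityLE (multilinearEval c) F) (hc : (monomials c).Nonempty) :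
    l1Norm c ≤ (2 * Fintype.card α + 1) ^ (⌊F * Real.log #(monomials c)⌋₊ + 1) := by
  refine l1Norm_le_pow hF hbdd hf (lt_of_le_of_lt ?_ (mul_one_sub_inv_pow_lt_one
    (r := #(monomials c)) (mod_cast hc.card_pos) hF (mod_cast Nat.lt_floor_add_one _)))
  have hinv : 0 ≤ 1 - 1 / F := sub_nonneg.2 ((div_le_one (by linarith)).2 hF)
  gcongr
  exact filter_subset _ _

end L1Norm

section LogBounds

theorem log_le_logb_two {r : ℝ} (hr : 1 ≤ r) : Real.log r ≤ Real.logb 2 r := by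
  rw [Real.logb]
  exact le_div_self (Real.log_nonneg hr) (Real.log_pos one_lt_two)
    (Real.log_two_lt_d9.le.trans (by norm_num))

theorem one_le_logb_two {r : ℕ} (hr : 2 ≤ r) : 1 ≤ Real.logb 2 r := by
  rw [Real.le_logb_iff_rpow_le one_lt_two (by positivity)]
  simpa using (mod_cast hr : (2 : ℝ) ≤ r)

theorem sq_natLog_bound_le_mul_logb_pow_four {r : ℕ} (hr : 2 ≤ r) :
    8 * (2 * (2 * (Nat.log 2 r + 1) ^ 2 : ℕ) + 1 : ℝ) ^ 2 ≤ 2312 * Real.logb 2 r ^ 4 := by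
  set l := Real.logb 2 r
  have hl : 1 ≤ l := one_le_logb_two hr
  have hd : (Nat.log 2 r + 1 : ℝ) ≤ 2 * l := by
    have : (Nat.log 2 r : ℝ) ≤ l := Real.natLog_le_logb r 2
    linarith
  push_cast
  calc 8 * (2 * (2 * (Nat.log 2 r + 1 : ℝ) ^ 2) + 1) ^ 2
      ≤ 8 * (2 * (2 * (2 * l) ^ 2) + l ^ 2) ^ 2 := by
        gcongr
        exact one_le_pow₀ hl
    _ = 2312 * l ^ 4 := by ring

theorem floor_mul_log_add_one_le {r : ℕ} (hr : 2 ≤ r) {F A : ℝ} (hF : 0 ≤ F)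
    (hFA : F ≤ A * Real.logb 2 r ^ 4) :
    (⌊F * Real.log r⌋₊ + 1 : ℕ) ≤ (A + 1) * Real.logb 2 r ^ 5 := by
  set l := Real.logb 2 r
  have hl : 1 ≤ l := one_le_logb_two hr
  have hr_one : (1 : ℝ) ≤ r := mod_cast one_le_two.trans hr
  have hlog : 0 ≤ Real.log r := Real.log_nonneg hr_one
  push_cast
  calc (⌊F * Real.log r⌋₊ + 1 : ℝ) ≤ F * Real.log r + 1 := by
        gcongr
        exact Nat.floor_le (mul_nonneg hF hlog)
    _ ≤ A * l ^ 4 * l + l ^ 5 := by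
        gcongr
        exacts [hF.trans hFA, log_le_logb_two hr_one, one_le_pow₀ hl]
    _ = (A + 1) * l ^ 5 := by ring

theorem two_mul_add_one_pow_le_rpow {n t : ℕ} {x : ℝ} (hn : 2 ≤ n) (ht : t ≤ x) :
    (2 * n + 1 : ℝ) ^ t ≤ (n : ℝ) ^ (3 * x) := by
  have one_le : (1 : ℝ) ≤ n := mod_cast (one_le_two.trans hn)
  have cube : (2 * n + 1 : ℝ) ≤ (n : ℝ) ^ 3 := by
    have : 2 * n + 1 ≤ n ^ 3 := by nlinarith [Nat.mul_le_mul hn hn]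
    exact_mod_cast this
  calc (2 * n + 1 : ℝ) ^ t ≤ ((n : ℝ) ^ 3) ^ t := by gcongr
    _ = (n : ℝ) ^ (3 * (t : ℝ)) := by
        rw [← pow_mul, ← Real.rpow_natCast]
        push_cast
        rfl
    _ ≤ (n : ℝ) ^ (3 * x) := by gcongr

end LogBounds

/-- For boolean `f` on `n ≥ 2` variables with sparsity `r ≥ 2`, the L1 norm of the
coefficients satisfies `‖f‖₁ ≤ n^{C·(log₂ r)^5}` for an absolute constant `C > 0`. -/
theorem stmt16 :
    ∃ C : ℝ, 0 < C ∧
      ∀ (n : ℕ) (f : Finset (Fin n) → ℝ),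
        2 ≤ n →
        (∀ x, f x = 0 ∨ f x = 1) →
        2 ≤ sparsity f →
        (∑ s : Finset (Fin n), |coeff f s|) ≤
          (n : ℝ) ^ (C * (Real.logb 2 (sparsity f)) ^ 5) := by
  refine ⟨3 * (2312 + 1), by norm_num, fun n f hn hbool hr => ?_⟩
  have hf : multilinearEval (coeff f) = f := funext (multilinearEval_coeff f)
  have hbdd : ∀ x, |multilinearEval (coeff f) x| ≤ 1 := fun x => by
    rcases hbool x with h | h <;> simp [hf, h]
  have hsens := blockSensitivityLE_of_card_monomials_lt (c := coeff f) (by rwa [hf])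
    ((card_monomials_coeff f).trans_lt (Nat.lt_pow_succ_log_self one_lt_two _))
  have hfrac := hsens.fracBlockSensitivityLE
  set F : ℝ := 8 * (2 * (2 * (Nat.log 2 (sparsity f) + 1) ^ 2 : ℕ) + 1 : ℝ) ^ 2
  have hF : 1 ≤ F := one_le_mul_of_one_le_of_one_le (by norm_num)
    (one_le_pow₀ (le_add_of_nonneg_left (by positivity)))
  have hnonempty : (monomials (coeff f)).Nonempty :=
    card_pos.1 (by rw [card_monomials_coeff]; exact two_pos.trans_le hr)
  have hl1 := l1Norm_le_pow_log hF hbdd hfrac hnonempty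
  rw [Fintype.card_fin, card_monomials_coeff] at hl1
  rw [mul_assoc]
  exact hl1.trans (two_mul_add_one_pow_le_rpow hn
    (floor_mul_log_add_one_le hr (zero_le_one.trans hF) (sq_natLog_bound_le_mul_logb_pow_four hr)))
end

section
/- For every prime power m there exist n = m² + m + 1 and a boolean function f : {0,1}^n → {0,1} such that MBS(f, 0^n) = 1 while there exists a p-smooth probability distribution supported on W(f, 0^n) with p = (m+1)/(m²+m+1); in particular FMBS(f, 0^n) ≥ (m²+m+1)/(m+1) ≥ m. (Concretely, f is the OR over the lines ℓ of the projective plane of order m of the AND of the variables indexed by the points of ℓ.) -/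
/-!
Let `f` be the disjunction, over the lines of a projective plane of order `m`, of the conjunction of
the points of the line. A set of points flips `f 0` exactly when it contains a line; since any two
lines meet, so do any two such sets. The uniform distribution on the `m² + m + 1` lines is smooth
because each point lies on only `m + 1` of them.
-/

open Finset Configuration
open scoped LinearAlgebra.Projectivization

section OrOfAnds

variable {ι α : Type*} {S : ι → Finset α} {w : Finset α}

open scoped Classical in
/-- The monotone boolean function `⋁ₗ ⋀_{i ∈ S l} xᵢ` given by the family of terms `S`, with an
input in `{0,1}^α` encoded as the set of its ones. -/
noncomputable def orOfAnds (S : ι → Finset α) (w : Finset α) : Bool :=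
  decide (∃ l, S l ⊆ w)

theorem orOfAnds_eq_true_iff : orOfAnds S w = true ↔ ∃ l, S l ⊆ w := by
  simp [orOfAnds]

variable [DecidableEq α]

theorem orOfAnds_empty_eq_false (hS : (Set.range S).Intersecting) : orOfAnds S ∅ = false := by
  rw [← Bool.not_eq_true, orOfAnds_eq_true_iff]
  rintro ⟨l, hl⟩
  exact hS.ne_bot (Set.mem_range_self l) (subset_empty.mp hl)

theorem orOfAnds_ne_empty_iff (hS : (Set.range S).Intersecting) :
    orOfAnds S w ≠ orOfAnds S ∅ ↔ ∃ l, S l ⊆ w := by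
  rw [orOfAnds_empty_eq_false hS, Bool.ne_false_iff, orOfAnds_eq_true_iff]

theorem orOfAnds_apply_ne_empty (hS : (Set.range S).Intersecting) (l : ι) :
    orOfAnds S (S l) ≠ orOfAnds S ∅ :=
  (orOfAnds_ne_empty_iff hS).mpr ⟨l, Subset.rfl⟩

theorem intersecting_setOf_orOfAnds_ne_empty (hS : (Set.range S).Intersecting) :
    {w | orOfAnds S w ≠ orOfAnds S ∅}.Intersecting := by
  intro v hv w hw hvw
  obtain ⟨k, hk⟩ := (orOfAnds_ne_empty_iff hS).mp hv
  obtain ⟨l, hl⟩ := (orOfAnds_ne_empty_iff hS).mp hw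
  exact hS (Set.mem_range_self k) (Set.mem_range_self l) (hvw.mono hk hl)

end OrOfAnds

section UniformLaw

variable {ι β : Type*} [Fintype ι] {S : ι → β} {w : β}

open scoped Classical in
/-- The probability mass function of `S l` for `l` uniformly random in `ι`. It is identically zero
if `ι` is empty. -/
noncomputable def uniformLaw (S : ι → β) (w : β) : ℝ :=
  ({l | S l = w} : Finset ι).dens

theorem uniformLaw_nonneg (S : ι → β) (w : β) : 0 ≤ uniformLaw S w :=
  NNRat.cast_nonneg _

theorem exists_eq_of_uniformLaw_ne_zero (hw : uniformLaw S w ≠ 0) : ∃ l, S l = w := by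
  classical
  obtain ⟨l, hl⟩ := dens_ne_zero.mp (NNRat.cast_ne_zero.mp hw)
  exact ⟨l, (mem_filter.mp hl).2⟩

variable [Fintype β]

theorem sum_filter_uniformLaw (S : ι → β) (p : β → Prop) [DecidablePred p] :
    ∑ w with p w, uniformLaw S w = (({l | p (S l)} : Finset ι).dens : ℝ) := by
  classical
  have hmaps : (({l | p (S l)} : Finset ι) : Set ι).MapsTo S ({w | p w} : Finset β) := by
    intro l hl
    simpa using hl
  rw [dens_eq_sum_dens_fiberwise hmaps, NNRat.cast_sum]
  refine sum_congr rfl fun w hw ↦ ?_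
  rw [uniformLaw, filter_filter]
  congr 2 with l
  grind

theorem sum_uniformLaw [Nonempty ι] (S : ι → β) : ∑ w, uniformLaw S w = 1 := by
  simpa using sum_filter_uniformLaw S fun _ ↦ True

end UniformLaw

section ProjectivePlane

variable {P L α : Type*} [Membership P L]

variable (P) in
theorem exists_mem_line_mem_line [HasPoints P L] [Nontrivial L] (k l : L) :
    ∃ p : P, p ∈ k ∧ p ∈ l := by
  obtain rfl | hkl := eq_or_ne k l
  · obtain ⟨l, hlk⟩ := exists_ne k
    have hmem := (HasPoints.mkPoint_ax (P := P) hlk).2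
    exact ⟨_, hmem, hmem⟩
  · exact ⟨HasPoints.mkPoint hkl, HasPoints.mkPoint_ax hkl⟩

variable (P L) in
theorem nontrivial_lines [ProjectivePlane P L] : Nontrivial L := by
  obtain ⟨_, _, p, _, l₂, l₃, -, -, -, -, -, -, hp₂, hp₃⟩ :=
    ProjectivePlane.exists_config (P := P) (L := L)
  exact ⟨l₂, l₃, fun h ↦ hp₃ (h ▸ hp₂)⟩

open scoped Classical in
theorem dens_lines_through [ProjectivePlane P L] [Finite P] [Fintype L] (p : P) :
    (({l | p ∈ l} : Finset L).dens : ℝ) =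
      ((ProjectivePlane.order P L : ℝ) + 1) /
        ((ProjectivePlane.order P L : ℝ) ^ 2 + ProjectivePlane.order P L + 1) := by
  have hcard : #{l : L | p ∈ l} = ProjectivePlane.order P L + 1 := by
    rw [← ProjectivePlane.lineCount_eq L p, lineCount, Nat.card_eq_fintype_card,
      Fintype.card_subtype]
  rw [dens, hcard, ProjectivePlane.card_lines P L]
  push_cast
  rfl

variable [Fintype α]

open scoped Classical in
/-- The points of the line `l`, labelled by `α` through the enumeration `e` of all points. -/
noncomputable def linePoints (e : α ≃ P) (l : L) : Finset α :=
  {i | e i ∈ l}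

theorem mem_linePoints {e : α ≃ P} {l : L} {i : α} : i ∈ linePoints e l ↔ e i ∈ l := by
  simp [linePoints]

theorem intersecting_range_linePoints [DecidableEq α] [HasPoints P L] [Nontrivial L] (e : α ≃ P) :
    (Set.range (linePoints (L := L) e)).Intersecting := by
  rintro _ ⟨k, rfl⟩ _ ⟨l, rfl⟩
  obtain ⟨p, hpk, hpl⟩ := exists_mem_line_mem_line P k l
  refine not_disjoint_iff.mpr ⟨e.symm p, ?_, ?_⟩ <;> simpa [mem_linePoints]

end ProjectivePlane

theorem order_projectivization (K : Type*) [Field K] [Finite K] [DecidableEq K] :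
    ProjectivePlane.order (ℙ K (Fin 3 → K)) (ℙ K (Fin 3 → K)) = Nat.card K := by
  have := Fintype.ofFinite (ℙ K (Fin 3 → K))
  have hcard : Fintype.card (ℙ K (Fin 3 → K)) = Nat.card K ^ 2 + Nat.card K + 1 := by
    rw [← Nat.card_eq_fintype_card, Projectivization.card_of_finrank K _ (n := 3) (by simp)]
    simp only [sum_range_succ, sum_range_zero]
    ring
  rw [ProjectivePlane.card_points (ℙ K (Fin 3 → K)) (ℙ K (Fin 3 → K))] at hcard
  nlinarith

theorem exists_projectivePlane_order_eq {m : ℕ} (hm : IsPrimePow m) :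
    ∃ (P : Type) (_ : Finite P) (_ : Membership P P) (_ : ProjectivePlane P P),
      ProjectivePlane.order P P = m := by
  classical
  obtain ⟨p, k, hp, hk, rfl⟩ := hm
  have : Fact p.Prime := ⟨hp.nat_prime⟩
  exact ⟨ℙ (GaloisField p k) (Fin 3 → GaloisField p k), inferInstance, inferInstance, inferInstance,
    (order_projectivization _).trans (GaloisField.card p k hk.ne')⟩

theorem stmt17_general {P L : Type*} [Membership P L] [ProjectivePlane P L] [Finite P] [Finite L]
    {m : ℕ} (hm : ProjectivePlane.order P L = m) :
    ∃ f : Finset (Fin (m ^ 2 + m + 1)) → Bool,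
      ({w | f w ≠ f ∅}.Nonempty ∧
        ∀ w1 ∈ {w | f w ≠ f ∅}, ∀ w2 ∈ {w | f w ≠ f ∅}, ¬ Disjoint w1 w2) ∧
      ∃ D : Finset (Fin (m ^ 2 + m + 1)) → ℝ,
        (∀ w, 0 ≤ D w) ∧ ∑ w, D w = 1 ∧ (∀ w, D w ≠ 0 → f w ≠ f ∅) ∧
        ∀ i, ∑ w with i ∈ w, D w ≤ ((m : ℝ) + 1) / ((m : ℝ) ^ 2 + m + 1) := by
  classical
  subst hm
  have := Fintype.ofFinite P
  have := Fintype.ofFinite L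
  have := nontrivial_lines P L
  let e := (Fintype.equivFinOfCardEq (ProjectivePlane.card_points P L)).symm
  let lines : L → Finset (Fin _) := linePoints e
  have hlines : (Set.range lines).Intersecting := intersecting_range_linePoints e
  refine ⟨orOfAnds lines, ⟨?_, ?_⟩, uniformLaw lines, uniformLaw_nonneg _, sum_uniformLaw _, ?_, ?_⟩
  · exact ⟨_, orOfAnds_apply_ne_empty hlines (Classical.arbitrary L)⟩
  · exact fun v hv w hw ↦ intersecting_setOf_orOfAnds_ne_empty hlines hv hw
  · intro w hw
    obtain ⟨l, rfl⟩ := exists_eq_of_uniformLaw_ne_zero hw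
    exact orOfAnds_apply_ne_empty hlines l
  · intro i
    simp only [sum_filter_uniformLaw, lines, mem_linePoints]
    exact (dens_lines_through (e i)).le

/-- Projective-plane separation between `MBS` and `FMBS` at a point: for every prime
power `m` there is a boolean function `f` on `n = m² + m + 1` variables with
`MBS(f, 0^n) = 1` (the family `W(f,0^n) = {w : f w ≠ f ∅}` is nonempty and contains
no two disjoint members), while there is a `p`-smooth probability distribution
supported on `W(f, 0^n)` with `p = (m+1)/(m²+m+1)`; in particular
`FMBS(f, 0^n) ≥ (m²+m+1)/(m+1) ≥ m`. -/
theorem stmt17 (m : ℕ) (hm : IsPrimePow m) :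
    ∃ f : Finset (Fin (m ^ 2 + m + 1)) → Bool,
      -- MBS(f, 0^n) = 1
      ({w : Finset (Fin (m ^ 2 + m + 1)) | f w ≠ f ∅}.Nonempty ∧
        ∀ w1 ∈ {w : Finset (Fin (m ^ 2 + m + 1)) | f w ≠ f ∅},
        ∀ w2 ∈ {w : Finset (Fin (m ^ 2 + m + 1)) | f w ≠ f ∅},
          ¬ Disjoint w1 w2) ∧
      -- a ((m+1)/(m²+m+1))-smooth distribution supported on W(f, 0^n)
      (∃ D : Finset (Fin (m ^ 2 + m + 1)) → ℝ,
        (∀ w, 0 ≤ D w) ∧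
        (∑ w : Finset (Fin (m ^ 2 + m + 1)), D w) = 1 ∧
        (∀ w, D w ≠ 0 → f w ≠ f ∅) ∧
        (∀ i : Fin (m ^ 2 + m + 1),
          (∑ w ∈ Finset.univ.filter (fun w : Finset (Fin (m ^ 2 + m + 1)) => i ∈ w), D w) ≤
            ((m : ℝ) + 1) / ((m : ℝ) ^ 2 + m + 1))) := by
  obtain ⟨P, _, _, _, hP⟩ := exists_projectivePlane_order_eq hm
  exact stmt17_general hP
end

section
/- Let n ≥ 2 be even and let Maj : {0,1}^n → {0,1} be the majority function Maj(z) = 1 iff Σ_i z_i ≥ n/2. Then: (1) the minimum size of a hitting set for mon(Maj) is exactly n/2 + 1 (so HSC(Maj, 0^n) = n/2 + 1); and (2) the uniform distribution on [n] satisfies Σ_{i ∈ w} 1/n ≥ 1/2 for every w ∈ mon(Maj) (so FHSC(Maj, 0^n) ≤ 2). -/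
/-- The set system of non-constant monomials of `f`. -/
def mon {n : ℕ} (f : Finset (Fin n) → ℝ) : Set (Finset (Fin n)) :=
  {s | coeff f s ≠ 0 ∧ s ≠ ∅}

/-- The majority function `Maj(z) = 1` iff `|z| ≥ n/2`. -/
noncomputable def Maj (n : ℕ) : Finset (Fin n) → ℝ :=
  fun z => if n / 2 ≤ z.card then 1 else 0

/-!
A minimal point of the support of `f` is a monomial of `f`, unless it is `∅`, and every monomial of
`f` contains a point of the support. So if the smallest sets in the support are exactly the
`k`-sets, then all `k`-sets are monomials and no monomial is smaller. A set `H` misses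
some `k`-set precisely when its complement has at least `k` elements, so the hitting sets are the
sets with more than `n - k` elements.
-/

/-- `H` is a hitting set (transversal) for the set system `F`. -/
def IsHittingSet {α : Type*} [DecidableEq α] (F : Set (Finset α)) (H : Finset α) : Prop :=
  ∀ s ∈ F, (H ∩ s).Nonempty

section HittingSet

variable {α : Type*} [Fintype α] [DecidableEq α] {F : Set (Finset α)} {H : Finset α} {k : ℕ}

lemma isHittingSet_of_card_lt_card_add (hF : ∀ s ∈ F, k ≤ s.card)
    (hH : Fintype.card α < H.card + k) : IsHittingSet F H := fun s hs ↦
  Finset.inter_nonempty_of_card_lt_card_add_card H.subset_univ s.subset_univ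
    (hH.trans_le (Nat.add_le_add_left (hF s hs) _))

lemma IsHittingSet.card_lt_card_add (hH : IsHittingSet F H)
    (hF : ∀ s : Finset α, s.card = k → s ∈ F) : Fintype.card α < H.card + k := by
  by_contra! hle
  have k_le_compl : k ≤ Hᶜ.card := by
    rw [Finset.card_compl]
    omega
  obtain ⟨s, hsH, hs⟩ := Finset.exists_subset_card_eq k_le_compl
  exact Finset.not_disjoint_iff_nonempty_inter.2 (hH s (hF s hs))
    (Finset.disjoint_right.2 fun _ hx ↦ Finset.mem_compl.1 (hsH hx))

end HittingSet

section Monomials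

variable {n : ℕ} {f : Finset (Fin n) → ℝ} {s : Finset (Fin n)}

lemma coeff_eq_self_of_forall_ssubset_eq_zero (h : ∀ t ⊂ s, f t = 0) : coeff f s = f s := by
  rw [coeff, Finset.sum_eq_single_of_mem s (Finset.mem_powerset_self s)]
  · simp
  · intro t ht hts
    rw [h t ((Finset.mem_powerset.1 ht).ssubset_of_ne hts), mul_zero]

lemma mem_mon_of_forall_ssubset_eq_zero (hs : s.Nonempty) (hfs : f s ≠ 0)
    (h : ∀ t ⊂ s, f t = 0) : s ∈ mon f :=
  ⟨by rwa [coeff_eq_self_of_forall_ssubset_eq_zero h], hs.ne_empty⟩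

lemma exists_subset_ne_zero_of_mem_mon (hs : s ∈ mon f) : ∃ t ⊆ s, f t ≠ 0 := by
  obtain ⟨t, ht, hne⟩ := Finset.exists_ne_zero_of_sum_ne_zero hs.1
  exact ⟨t, Finset.mem_powerset.1 ht, right_ne_zero_of_mul hne⟩

end Monomials

theorem stmt18_general {n k : ℕ} {f : Finset (Fin n) → ℝ} (hk : 0 < k) (hkn : k ≤ n)
    (f_eq_zero : ∀ t, t.card < k → f t = 0) (f_ne_zero : ∀ t, t.card = k → f t ≠ 0) :
    (∃ H : Finset (Fin n), H.card = n - k + 1 ∧ IsHittingSet (mon f) H) ∧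
    (∀ H : Finset (Fin n), IsHittingSet (mon f) H → n - k + 1 ≤ H.card) ∧
    (∀ w ∈ mon f, (k : ℝ) / n ≤ ∑ _i ∈ w, (1 : ℝ) / n) := by
  have le_card_of_mem : ∀ s ∈ mon f, k ≤ s.card := fun s hs ↦ by
    obtain ⟨t, hts, hft⟩ := exists_subset_ne_zero_of_mem_mon hs
    exact (not_lt.1 fun hlt ↦ hft (f_eq_zero t hlt)).trans (Finset.card_le_card hts)
  have mem_of_card_eq : ∀ s : Finset (Fin n), s.card = k → s ∈ mon f := fun s hs ↦
    mem_mon_of_forall_ssubset_eq_zero (Finset.card_pos.1 (hs ▸ hk)) (f_ne_zero s hs)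
      fun t hts ↦ f_eq_zero t (hs ▸ Finset.card_lt_card hts)
  refine ⟨?_, fun H hH ↦ ?_, fun w hw ↦ ?_⟩
  · obtain ⟨H, -, hH⟩ := Finset.exists_subset_card_eq (s := (Finset.univ : Finset (Fin n)))
      (n := n - k + 1) (by rw [Finset.card_fin]; omega)
    exact ⟨H, hH, isHittingSet_of_card_lt_card_add le_card_of_mem
      (by rw [Fintype.card_fin]; omega)⟩
  · have := hH.card_lt_card_add mem_of_card_eq
    rw [Fintype.card_fin] at this
    omega
  · rw [Finset.sum_const, nsmul_eq_mul, mul_one_div]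
    gcongr
    exact le_card_of_mem w hw

/-- For even `n ≥ 2`: (1) the minimum hitting set size for `mon(Maj)` is exactly
`n/2 + 1` (so `HSC(Maj, 0^n) = n/2 + 1`), and (2) the uniform distribution on `[n]`
gives every monomial weight at least `1/2` (so `FHSC(Maj, 0^n) ≤ 2`). -/
theorem stmt18 (n : ℕ) (hn : 2 ≤ n) (heven : Even n) :
    (∃ H : Finset (Fin n), H.card = n / 2 + 1 ∧ ∀ s ∈ mon (Maj n), (H ∩ s).Nonempty) ∧
    (∀ H : Finset (Fin n), (∀ s ∈ mon (Maj n), (H ∩ s).Nonempty) → n / 2 + 1 ≤ H.card) ∧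
    (∀ w ∈ mon (Maj n), (1 : ℝ) / 2 ≤ ∑ _i ∈ w, (1 : ℝ) / n) := by
  have sub_half : n - n / 2 = n / 2 := by grind
  have half_div : ((n / 2 : ℕ) : ℝ) / n = 1 / 2 := by
    rw [Nat.cast_div_charZero heven.two_dvd, Nat.cast_ofNat]
    field_simp
  simpa only [sub_half, half_div, IsHittingSet] using stmt18_general (f := Maj n) (k := n / 2)
    (by omega) (by omega) (fun t ht ↦ if_neg ht.not_ge) (fun t ht ↦ by simp [Maj, ht])
end
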